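/- Let φ satisfy: φ : ℝ → [0,∞) continuous, C² on (0,∞), φ = 0 on (−∞,0], φ > 0 on (0,∞), φ(η) ≥ Cη^k near 0 for some 0 < k < 3/2, and the normalization 4π ∫₀¹ φ(η)(1−η)³ dη = 1. For κ > 0 let y_κ be the Einstein–Vlasov steady state solution with y_κ(0) = κ, inducing ρ_κ = g ∘ y_κ, σ_κ = h ∘ y_κ, m_κ(r) = 4π ∫₀^r ρ_κ s² ds, e^{2λ_κ(r)} = (1 − 2m_κ(r)/r)^{−1}, μ_κ(r) = lim_{s→∞} y_κ(s) − y_κ(r) (so μ_κ' = −y_κ'). Then there exist parameters 0 < α₁ < α₂ < 1/4, κ₀ > 0 sufficiently large, and constants δ > 0 and C > 0 such that for every κ ≥ κ₀ and every r in the critical layer [κ^{α₁} e^{−2κ}, κ^{α₂} e^{−2κ}], all of the following quantities are bounded by C κ^{−δ}: |r² ρ_κ(r) − 3/(56π)|, |r² σ_κ(r) − 1/(56π)|, |m_κ(r)/r − 3/14|, |2 r μ_κ'(r) − 1|, |e^{2λ_κ(r)} − 7/4|, and |r λ_κ'(r)|. -/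

import Mathlib

/-!
Near the centre the field equations are almost scale invariant. In the variables `u = m/r` and
`w = 4π r² e^{4y}` (the scale-invariant massless density), with `τ = log r`, the massless system is
autonomous,

  `u' = w - u`,   `w' = w (2 - 8u - (4/3) w) / (1 - 2u)`,

and its fixed point `u = w = 3/14` is the Bisnovatyi-Kogan–Zel'dovich solution. This system has an
explicit Lyapunov function `V = (8/7) G((7/4)(1 - 2u)) + (3/14) G((14/3) w)`, with
`G(x) = x - 1 - log x`, which satisfies
`V' = -(8 (u - 3/14)² + (4/3) (w - 3/14)²) / (1 - 2u)`.

The massive profiles differ from the massless ones `e^{4y}` and `e^{4y}/3` by a relative error at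
most `K e^{-y}` (`EV_bounds`). As long as `y ≥ κ/2`, the function `V` evaluated along the actual
steady state therefore satisfies
`V' ≤ -(6 (u - 3/14)² + (w - 3/14)²/2) + 2ε²` with `ε = K e^{-κ/2}` (`steady_dissipation`), so that
no comparison with an exact massless solution is needed.

At `r₀ = e^{-2κ}/10` one has `V ≤ 2` (`lyapV_initial`), hence `V ≤ 3` on the layer
(`lyapV_trapped`); the lower bound on `w` this implies keeps `y ≥ κ/2` (`y_large`). On `V ≤ 3` the
function `V` is comparable with the squared distance to the fixed point (`lyapV_region`), so `V`
decays like `(r₀/r)^c` up to an error of order `ε²` (`decay_bound`). For `r ≥ κ^{1/10} e^{-2κ}` this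
is a negative power of `κ` (`layer_deviation`), and all six quantities are Lipschitz functions of
`u`, `w` and the relative errors (`final_bounds`).
-/

open MeasureTheory Set Filter Topology
open scoped ENNReal

noncomputable section

/-- Einstein–Vlasov density profile `g`. -/
def gEV (φ : ℝ → ℝ) (y : ℝ) : ℝ :=
  if 0 < y then 4 * Real.pi * Real.exp (4 * y) *
    ∫ η in (0 : ℝ)..(1 - Real.exp (-y)),
      φ η * (1 - η) ^ 2 * Real.sqrt ((1 - η) ^ 2 - Real.exp (-2 * y))
  else 0

/-- Einstein–Vlasov pressure profile `h`. -/
def hEV (φ : ℝ → ℝ) (y : ℝ) : ℝ :=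
  if 0 < y then 4 * Real.pi / 3 * Real.exp (4 * y) *
    ∫ η in (0 : ℝ)..(1 - Real.exp (-y)),
      φ η * ((1 - η) ^ 2 - Real.exp (-2 * y)) ^ ((3 : ℝ) / 2)
  else 0

/-- The mass function `m(r) = 4π ∫₀^r g(y(s)) s² ds`. -/
def mEV (φ : ℝ → ℝ) (y : ℝ → ℝ) (r : ℝ) : ℝ :=
  4 * Real.pi * ∫ s in (0 : ℝ)..r, gEV φ (y s) * s ^ 2

/-- `y` solves the stationary Einstein–Vlasov equation with `y(0) = κ`. -/
def IsEVSteady (φ : ℝ → ℝ) (κ : ℝ) (y : ℝ → ℝ) : Prop :=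
  ContDiffOn ℝ 2 y (Ici 0) ∧ y 0 = κ ∧
  ∀ r : ℝ, 0 < r → 2 * mEV φ y r < r ∧
    deriv y r = -(1 - 2 * mEV φ y r / r)⁻¹ *
      (mEV φ y r / r ^ 2 + 4 * Real.pi * r * hEV φ (y r))

/-- The metric coefficient `λ(r) = −(1/2) log(1 − 2m(r)/r)`. -/
def lamEV (φ : ℝ → ℝ) (y : ℝ → ℝ) (r : ℝ) : ℝ :=
  -(1 / 2) * Real.log (1 - 2 * mEV φ y r / r)

/-! ### The profile functions -/

/-- The integral in `g` may be taken over the fixed interval `[0, 1]`, since `√` vanishes at negative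
arguments; for `y ≤ 0` the integrand is identically zero. -/
lemma gEV_eq (φ : ℝ → ℝ) (hφ : Continuous φ) (y : ℝ) :
    gEV φ y = 4 * Real.pi * Real.exp (4 * y) *
      ∫ η in (0 : ℝ)..1, φ η * (1 - η) ^ 2 * √((1 - η) ^ 2 - Real.exp (-2 * y)) := by
  have hsq : Real.exp (-2 * y) = Real.exp (-y) ^ 2 := by
    rw [← Real.exp_nat_mul]; congr 1; push_cast; ring
  have he := Real.exp_pos (-y)
  unfold gEV
  split_ifs with hy
  · have hint : ∀ a b : ℝ, IntervalIntegrable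
        (fun η => φ η * (1 - η) ^ 2 * √((1 - η) ^ 2 - Real.exp (-2 * y))) volume a b :=
      fun a b => Continuous.intervalIntegrable (by fun_prop) a b
    rw [← intervalIntegral.integral_add_adjacent_intervals
      (hint 0 (1 - Real.exp (-y))) (hint (1 - Real.exp (-y)) 1)]
    have h0 : ∫ η in (1 - Real.exp (-y))..1,
        φ η * (1 - η) ^ 2 * √((1 - η) ^ 2 - Real.exp (-2 * y)) = 0 := by
      apply intervalIntegral.integral_zero_ae
      refine Eventually.of_forall fun η hη => ?_
      rw [uIoc_of_le (by linarith)] at hη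
      rw [Real.sqrt_eq_zero_of_nonpos, mul_zero]
      rw [hsq]
      nlinarith [hη.1, hη.2]
    rw [h0, add_zero]
  · have h0 : ∫ η in (0 : ℝ)..1,
        φ η * (1 - η) ^ 2 * √((1 - η) ^ 2 - Real.exp (-2 * y)) = 0 := by
      apply intervalIntegral.integral_zero_ae
      refine Eventually.of_forall fun η hη => ?_
      rw [uIoc_of_le (by linarith)] at hη
      rw [Real.sqrt_eq_zero_of_nonpos, mul_zero]
      have : 1 ≤ Real.exp (-2 * y) := Real.one_le_exp (by linarith)
      nlinarith [hη.1, hη.2]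
    rw [h0, mul_zero]

/-- The analogue of `gEV_eq` for the pressure, with the power `3/2` written as `√` cubed so that the
integrand also vanishes where its base is negative. -/
lemma hEV_eq (φ : ℝ → ℝ) (hφ : Continuous φ) (y : ℝ) :
    hEV φ y = 4 * Real.pi / 3 * Real.exp (4 * y) *
      ∫ η in (0 : ℝ)..1, φ η * √((1 - η) ^ 2 - Real.exp (-2 * y)) ^ 3 := by
  have hsq : Real.exp (-2 * y) = Real.exp (-y) ^ 2 := by
    rw [← Real.exp_nat_mul]; congr 1; push_cast; ring
  have he := Real.exp_pos (-y)
  unfold hEV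
  split_ifs with hy
  · have hint : ∀ a b : ℝ, IntervalIntegrable
        (fun η => φ η * √((1 - η) ^ 2 - Real.exp (-2 * y)) ^ 3) volume a b :=
      fun a b => Continuous.intervalIntegrable (by fun_prop) a b
    rw [← intervalIntegral.integral_add_adjacent_intervals
      (hint 0 (1 - Real.exp (-y))) (hint (1 - Real.exp (-y)) 1)]
    have h0 : ∫ η in (1 - Real.exp (-y))..1,
        φ η * √((1 - η) ^ 2 - Real.exp (-2 * y)) ^ 3 = 0 := by
      apply intervalIntegral.integral_zero_ae
      refine Eventually.of_forall fun η hη => ?_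
      rw [uIoc_of_le (by linarith)] at hη
      rw [Real.sqrt_eq_zero_of_nonpos]
      · simp
      rw [hsq]
      nlinarith [hη.1, hη.2]
    rw [h0, add_zero]
    congr 1
    apply intervalIntegral.integral_congr
    intro η hη
    have he1 : Real.exp (-y) ≤ 1 := Real.exp_le_one_iff.2 (by linarith)
    rw [uIcc_of_le (by linarith)] at hη
    have hnn : 0 ≤ (1 - η) ^ 2 - Real.exp (-2 * y) := by
      rw [hsq]; nlinarith [hη.1, hη.2]
    show φ η * ((1 - η) ^ 2 - Real.exp (-2 * y)) ^ ((3 : ℝ) / 2) = _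
    congr 1
    rw [Real.sqrt_eq_rpow, ← Real.rpow_mul_natCast hnn]
    norm_num
  · have h0 : ∫ η in (0 : ℝ)..1,
        φ η * √((1 - η) ^ 2 - Real.exp (-2 * y)) ^ 3 = 0 := by
      apply intervalIntegral.integral_zero_ae
      refine Eventually.of_forall fun η hη => ?_
      rw [uIoc_of_le (by linarith)] at hη
      rw [Real.sqrt_eq_zero_of_nonpos]
      · simp
      have : 1 ≤ Real.exp (-2 * y) := Real.one_le_exp (by linarith)
      nlinarith [hη.1, hη.2]
    rw [h0, mul_zero]

lemma gEV_continuous (φ : ℝ → ℝ) (hφ : Continuous φ) : Continuous (gEV φ) := by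
  have h : gEV φ = fun y => 4 * Real.pi * Real.exp (4 * y) *
      ∫ η in (0 : ℝ)..1, φ η * (1 - η) ^ 2 * √((1 - η) ^ 2 - Real.exp (-2 * y)) :=
    funext (gEV_eq φ hφ)
  rw [h]
  have : Continuous fun y : ℝ =>
      ∫ η in (0 : ℝ)..1, φ η * (1 - η) ^ 2 * √((1 - η) ^ 2 - Real.exp (-2 * y)) :=
    intervalIntegral.continuous_parametric_intervalIntegral_of_continuous' (by fun_prop) 0 1
  fun_prop

/-- Comparison of the massive momentum `√((1-η)² - e^{-2y})` with the massless one `1 - η`. -/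
lemma sqrt_bounds (y η : ℝ) (h1 : η ≤ 1) :
    √((1 - η) ^ 2 - Real.exp (-2 * y)) ≤ 1 - η ∧
      1 - η - Real.exp (-y) ≤ √((1 - η) ^ 2 - Real.exp (-2 * y)) := by
  have hsq : Real.exp (-2 * y) = Real.exp (-y) ^ 2 := by
    rw [← Real.exp_nat_mul]; congr 1; push_cast; ring
  have he := Real.exp_pos (-y)
  rw [hsq]
  constructor
  · rw [Real.sqrt_le_left (by linarith)]
    nlinarith
  · rcases le_or_gt (1 - η) (Real.exp (-y)) with h | h
    · linarith [Real.sqrt_nonneg ((1 - η) ^ 2 - Real.exp (-y) ^ 2)]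
    · apply Real.le_sqrt_of_sq_le
      nlinarith

/-- Two-sided bounds comparing the massive profiles with the massless ones, `e^{4y}` for the
density and `e^{4y}/3` for the pressure. -/
def ProfileBounds (φ : ℝ → ℝ) (K : ℝ) : Prop :=
  ∀ y : ℝ,
    (0 ≤ gEV φ y ∧ gEV φ y ≤ Real.exp (4 * y) ∧
        (1 - K * Real.exp (-y)) * Real.exp (4 * y) ≤ gEV φ y) ∧
    (0 ≤ 3 * hEV φ y ∧ 3 * hEV φ y ≤ Real.exp (4 * y) ∧
        (1 - K * Real.exp (-y)) * Real.exp (4 * y) ≤ 3 * hEV φ y)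

/-- Replacing a massive momentum by the massless one costs at most `3 e^{-y}` under the integral
sign, and the normalization of `φ` makes the massless integral equal to `1 / (4π)`. -/
lemma EV_bounds (φ : ℝ → ℝ) (hφ : Continuous φ) (hnn : ∀ η, 0 ≤ φ η)
    (hnorm : 4 * Real.pi * ∫ η in (0 : ℝ)..1, φ η * (1 - η) ^ 3 = 1) :
    ∃ K : ℝ, 0 < K ∧ ProfileBounds φ K := by
  have hI : 0 ≤ ∫ η in (0 : ℝ)..1, φ η :=
    intervalIntegral.integral_nonneg (by norm_num) fun η _ => hnn η
  have hpi := Real.pi_pos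
  refine ⟨12 * Real.pi * (∫ η in (0 : ℝ)..1, φ η) + 1, by positivity, fun y => ?_⟩
  set I := ∫ η in (0 : ℝ)..1, φ η with hIdef
  set b := Real.exp (-y) with hb
  have hbpos : 0 < b := Real.exp_pos _
  set E := Real.exp (4 * y) with hE
  have hEpos : 0 < E := Real.exp_pos _
  set J := ∫ η in (0 : ℝ)..1, φ η * (1 - η) ^ 3 with hJ
  have i1 : IntervalIntegrable (fun η => φ η * (1 - η) ^ 3) volume 0 1 :=
    Continuous.intervalIntegrable (by fun_prop) _ _
  have i2 : IntervalIntegrable (fun η => φ η) volume 0 1 :=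
    Continuous.intervalIntegrable (by fun_prop) _ _
  have i3 : IntervalIntegrable
      (fun η => φ η * (1 - η) ^ 2 * √((1 - η) ^ 2 - Real.exp (-2 * y))) volume 0 1 :=
    Continuous.intervalIntegrable (by fun_prop) _ _
  have i4 : IntervalIntegrable
      (fun η => φ η * √((1 - η) ^ 2 - Real.exp (-2 * y)) ^ 3) volume 0 1 :=
    Continuous.intervalIntegrable (by fun_prop) _ _
  have key : ∀ A : ℝ, 0 ≤ A → A ≤ J → J - 3 * b * I ≤ A →
      0 ≤ 4 * Real.pi * E * A ∧ 4 * Real.pi * E * A ≤ E ∧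
      (1 - (12 * Real.pi * I + 1) * b) * E ≤ 4 * Real.pi * E * A := by
    intro A h0 h1 h2
    refine ⟨by positivity, ?_, ?_⟩
    · calc 4 * Real.pi * E * A ≤ 4 * Real.pi * E * J := by gcongr
        _ = E * (4 * Real.pi * J) := by ring
        _ = E := by rw [hnorm, mul_one]
    · calc (1 - (12 * Real.pi * I + 1) * b) * E ≤ (1 - (12 * Real.pi * I) * b) * E := by
            gcongr; linarith
        _ = (4 * Real.pi * J - 12 * Real.pi * I * b) * E := by rw [hnorm]
        _ = 4 * Real.pi * E * (J - 3 * b * I) := by ring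
        _ ≤ _ := by gcongr
  constructor
  · rw [gEV_eq φ hφ]
    apply key
    · apply intervalIntegral.integral_nonneg (by norm_num)
      intro η _
      have := hnn η
      positivity
    · apply intervalIntegral.integral_mono_on (by norm_num) i3 i1
      intro η hη
      have := (sqrt_bounds y η hη.2).1
      have := hnn η
      calc φ η * (1 - η) ^ 2 * √((1 - η) ^ 2 - Real.exp (-2 * y))
          ≤ φ η * (1 - η) ^ 2 * (1 - η) := by gcongr
        _ = _ := by ring
    · rw [← intervalIntegral.integral_const_mul, ← intervalIntegral.integral_sub i1 (i2.const_mul _)]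
      apply intervalIntegral.integral_mono_on (by norm_num) (i1.sub (i2.const_mul _)) i3
      intro η hη
      have h2 := (sqrt_bounds y η hη.2).2
      have h3 := hnn η
      have h4 : (1 - η) ^ 2 ≤ 1 := by nlinarith [hη.1, hη.2]
      calc φ η * (1 - η) ^ 3 - 3 * b * φ η
          ≤ φ η * (1 - η) ^ 3 - φ η * (1 - η) ^ 2 * b := by
            have : 0 ≤ φ η * b := by positivity
            nlinarith
        _ = φ η * (1 - η) ^ 2 * (1 - η - b) := by ring
        _ ≤ _ := by gcongr
  · rw [hEV_eq φ hφ]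
    rw [show ∀ A : ℝ, 3 * (4 * Real.pi / 3 * E * A) = 4 * Real.pi * E * A by intro A; ring]
    apply key
    · apply intervalIntegral.integral_nonneg (by norm_num)
      intro η _
      have := hnn η
      positivity
    · apply intervalIntegral.integral_mono_on (by norm_num) i4 i1
      intro η hη
      have := (sqrt_bounds y η hη.2).1
      have := hnn η
      gcongr
    · rw [← intervalIntegral.integral_const_mul, ← intervalIntegral.integral_sub i1 (i2.const_mul _)]
      apply intervalIntegral.integral_mono_on (by norm_num) (i1.sub (i2.const_mul _)) i4
      intro η hη
      have h1 := (sqrt_bounds y η hη.2).1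
      have h2 := (sqrt_bounds y η hη.2).2
      have h3 := hnn η
      set s := √((1 - η) ^ 2 - Real.exp (-2 * y)) with hs
      have hs0 : 0 ≤ s := Real.sqrt_nonneg _
      have h5 : 1 - η ≤ 1 := by linarith [hη.1]
      have h4 : (1 - η) ^ 3 - 3 * b ≤ s ^ 3 := by
        have e1 : (1 - η) ^ 3 - s ^ 3 =
          (1 - η - s) * ((1 - η) ^ 2 + (1 - η) * s + s ^ 2) := by ring
        have e2 : (1 - η) ^ 2 + (1 - η) * s + s ^ 2 ≤ 3 := by nlinarith
        have e3 : (1 - η - s) * ((1 - η) ^ 2 + (1 - η) * s + s ^ 2) ≤ b * 3 := by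
          apply mul_le_mul (by linarith) e2 (by nlinarith) hbpos.le
        linarith
      calc φ η * (1 - η) ^ 3 - 3 * b * φ η = φ η * ((1 - η) ^ 3 - 3 * b) := by ring
        _ ≤ _ := by gcongr

/-! ### The Lyapunov function of the massless system -/

/-- The convex function `G(x) = x - 1 - log x`, minimal at `x = 1` with `G(1) = 0`. -/
def entG (x : ℝ) : ℝ := x - 1 - Real.log x

lemma entG_nonneg {x : ℝ} (hx : 0 < x) : 0 ≤ entG x := by
  have := Real.log_le_sub_one_of_pos hx
  unfold entG; linarith

lemma entG_le {x : ℝ} (hx : 0 < x) : entG x ≤ (x - 1) ^ 2 / x := by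
  have h := Real.one_sub_inv_le_log_of_pos hx
  have : (x - 1) ^ 2 / x = x - 2 + x⁻¹ := by field_simp; ring
  unfold entG; linarith

/-- Quadratic lower bound for `G`: from `log x = 2 log √x ≤ 2 (√x - 1)` follows
`G(x) ≥ (√x - 1)²`. -/
lemma sq_le_entG {x : ℝ} (hx : 0 < x) : (x - 1) ^ 2 ≤ 2 * (x + 1) * entG x := by
  have hs := Real.sqrt_pos.2 hx
  have h := Real.log_le_sub_one_of_pos hs
  rw [Real.log_sqrt hx.le] at h
  have h2 : (√x - 1) ^ 2 ≤ entG x := by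
    unfold entG; nlinarith [Real.sq_sqrt hx.le]
  calc (x - 1) ^ 2 = (√x + 1) ^ 2 * (√x - 1) ^ 2 := by
        nth_rewrite 1 [← Real.sq_sqrt hx.le]; ring
    _ ≤ (√x + 1) ^ 2 * entG x := by gcongr
    _ ≤ _ := by
      have := entG_nonneg hx
      gcongr
      nlinarith [Real.sq_sqrt hx.le, sq_nonneg (√x - 1)]

lemma entG_lower {x M : ℝ} (hx : 0 < x) (h : entG x ≤ M) : Real.exp (-(M + 1)) ≤ x := by
  rw [← Real.le_log_iff_exp_le hx]
  unfold entG at h; linarith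

lemma entG_upper {x M : ℝ} (hx : 0 < x) (h : entG x ≤ M) : x ≤ 2 * (M + 1) := by
  have h2 := Real.log_le_sub_one_of_pos (show 0 < x / 2 by linarith)
  rw [Real.log_div hx.ne' (by norm_num)] at h2
  have := Real.log_two_lt_d9
  unfold entG at h; linarith

/-- The Lyapunov function `V = (8/7) G((7/4)(1 - 2u)) + (3/14) G((14/3) w)` of the compactness
ratio `u = m/r` and the scale-invariant density `w = 4π r² e^{4y}`. -/
def lyapV (u w : ℝ) : ℝ := 8 / 7 * entG (7 / 4 * (1 - 2 * u)) + 3 / 14 * entG (14 / 3 * w)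

/-- The dissipation inequality, as a statement about real numbers: the left side is the derivative
`r dV/dr`, with `a` and `b` the ratios of density and pressure to their massless values. For
`a = b = 1` it equals `-(8 (u - 3/14)² + (4/3) (w - 3/14)²) / (1 - 2u)`. -/
lemma dissipation {u w a b ε : ℝ} (hu0 : 0 ≤ u) (hu : 2 * u < 1)
    (hε0 : 0 ≤ ε) (hε : ε ≤ 1 / 20) (ha1 : a ≤ 1) (ha : 1 - ε ≤ a) (hb1 : b ≤ 1)
    (hb : 1 - ε ≤ b) :
    (8 * (u - 3 / 14) * (w * a - u)
      + (w - 3 / 14) * (2 - 8 * u - 4 / 3 * (w * b))) / (1 - 2 * u)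
      ≤ -(6 * (u - 3 / 14) ^ 2 + (w - 3 / 14) ^ 2 / 2) + 2 * ε ^ 2 := by
  obtain ⟨p, rfl⟩ : ∃ p, u = p + 3 / 14 := ⟨u - 3 / 14, by ring⟩
  obtain ⟨q, rfl⟩ : ∃ q, w = q + 3 / 14 := ⟨w - 3 / 14, by ring⟩
  obtain ⟨α, rfl⟩ : ∃ α, a = 1 - α := ⟨1 - a, by ring⟩
  obtain ⟨β, rfl⟩ : ∃ β, b = 1 - β := ⟨1 - b, by ring⟩
  simp only [add_sub_cancel_right]
  have hα0 : 0 ≤ α := by linarith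
  have hα : α ≤ ε := by linarith
  have hβ0 : 0 ≤ β := by linarith
  have hβ : β ≤ ε := by linarith
  have hα2 : α ^ 2 ≤ ε ^ 2 := by gcongr
  have hβ2 : β ^ 2 ≤ ε ^ 2 := by gcongr
  set D := 1 - 2 * (p + 3 / 14) with hD
  have hDpos : 0 < D := by linarith
  have hD1 : D ≤ 1 := by linarith
  have t1 : -8 * (p * q) * α ≤ 1 / 5 * (p ^ 2 + q ^ 2) := by
    have h8 : -8 * (p * q) ≤ 4 * (p ^ 2 + q ^ 2) := by nlinarith [sq_nonneg (p + q)]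
    have : -8 * (p * q) * α ≤ 4 * (p ^ 2 + q ^ 2) * α := mul_le_mul_of_nonneg_right h8 hα0
    nlinarith [sq_nonneg p, sq_nonneg q]
  have t2 : -(12 / 7) * p * α ≤ p ^ 2 + 36 / 49 * ε ^ 2 := by
    nlinarith [sq_nonneg (p + 6 / 7 * α)]
  have t3 : 4 / 3 * q ^ 2 * β ≤ 1 / 15 * q ^ 2 := by nlinarith [sq_nonneg q]
  have t4 : 2 / 7 * q * β ≤ q ^ 2 / 3 + 3 / 49 * ε ^ 2 := by
    nlinarith [sq_nonneg (q - 3 / 7 * β)]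
  have hN : 8 * p * ((q + 3 / 14) * (1 - α) - (p + 3 / 14))
      + q * (2 - 8 * (p + 3 / 14) - 4 / 3 * ((q + 3 / 14) * (1 - β)))
      ≤ -(6 * p ^ 2 + q ^ 2 / 2) + ε ^ 2 := by
    nlinarith [sq_nonneg p, sq_nonneg q, sq_nonneg ε]
  rw [div_le_iff₀ hDpos]
  refine hN.trans ?_
  rcases le_total (ε ^ 2) (6 * p ^ 2 + q ^ 2 / 2) with h | h
  · nlinarith [sq_nonneg ε]
  -- if the perturbation wins, then `u` is close to `3/14` and `1 - 2u` is bounded below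
  · have hp : p ≤ 1 / 30 := by nlinarith [sq_nonneg q]
    have hD2 : 1 / 2 ≤ D := by linarith
    nlinarith [sq_nonneg p, sq_nonneg q]

/-- The dissipation inequality for functions `m` and `y` that satisfy the field equations at `r`,
with density `gv` and pressure `hv` there. -/
lemma lyapV_hasDerivAt {m y : ℝ → ℝ} {r gv hv ε y' : ℝ} (hr : 0 < r)
    (hm : HasDerivAt m (4 * Real.pi * (gv * r ^ 2)) r) (hy : HasDerivAt y y' r)
    (hy' : y' = -(1 - 2 * m r / r)⁻¹ * (m r / r ^ 2 + 4 * Real.pi * r * hv))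
    (hm0 : 0 ≤ m r) (hmr : 2 * m r < r) (hε0 : 0 ≤ ε) (hε : ε ≤ 1 / 20)
    (hg : gv ≤ Real.exp (4 * y r)) (hg' : (1 - ε) * Real.exp (4 * y r) ≤ gv)
    (hh : 3 * hv ≤ Real.exp (4 * y r)) (hh' : (1 - ε) * Real.exp (4 * y r) ≤ 3 * hv) :
    ∃ V', HasDerivAt (fun s => lyapV (m s / s) (4 * Real.pi * s ^ 2 * Real.exp (4 * y s))) V' r ∧
      r * V' ≤ -(6 * (m r / r - 3 / 14) ^ 2
        + (4 * Real.pi * r ^ 2 * Real.exp (4 * y r) - 3 / 14) ^ 2 / 2) + 2 * ε ^ 2 := by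
  have hpi := Real.pi_pos
  have hE := Real.exp_pos (4 * y r)
  have hD : 0 < 1 - 2 * (m r / r) := by
    have : m r / r < 1 / 2 := by rw [div_lt_iff₀ hr]; linarith
    linarith
  have hu := hm.div (hasDerivAt_id r) hr.ne'
  have hw := (((hasDerivAt_pow 2 r).const_mul (4 * Real.pi))).mul ((hy.const_mul 4).exp)
  have hX := ((hu.const_mul 2).const_sub 1).const_mul (7 / 4 : ℝ)
  have hZ := hw.const_mul (14 / 3 : ℝ)
  have hXp : (7 / 4 : ℝ) * (1 - 2 * (m r / r)) ≠ 0 := by positivity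
  have hZp : (14 / 3 : ℝ) * (4 * Real.pi * r ^ 2 * Real.exp (4 * y r)) ≠ 0 := by positivity
  have hV := (((hX.sub_const 1).sub (hX.log hXp)).const_mul (8 / 7 : ℝ)).add
    (((hZ.sub_const 1).sub (hZ.log hZp)).const_mul (3 / 14 : ℝ))
  refine ⟨_, hV, ?_⟩
  have key := dissipation (u := m r / r) (w := 4 * Real.pi * r ^ 2 * Real.exp (4 * y r))
    (a := gv / Real.exp (4 * y r)) (b := 3 * hv / Real.exp (4 * y r)) (ε := ε)
    (by positivity) (by linarith) hε0 hε ((div_le_one hE).2 hg) ((le_div_iff₀ hE).2 hg')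
    ((div_le_one hE).2 hh) ((le_div_iff₀ hE).2 hh')
  refine le_of_eq_of_le ?_ key
  rw [hy']
  have hD' : r - 2 * m r ≠ 0 := by linarith
  have e1 : 1 - 2 * m r / r = (r - 2 * m r) / r := by field_simp
  have e2 : 1 - 2 * (m r / r) = (r - 2 * m r) / r := by field_simp
  simp only [id, Pi.div_apply, Pi.mul_apply, e1, e2]
  field_simp
  ring

/-- On the sublevel set `V ≤ 3` the quantities `1 - 2u` and `w` are bounded away from `0`, and `V` is
comparable with the squared distance to the fixed point `u = w = 3/14`. -/
lemma lyapV_region {u w : ℝ} (hu0 : 0 ≤ u) (hu : 2 * u < 1) (hw : 0 < w) (hV : lyapV u w ≤ 3) :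
    Real.exp (-17) ≤ 1 - 2 * u ∧ Real.exp (-17) ≤ w ∧ w ≤ 7 ∧
    (u - 3 / 14) ^ 2 ≤ lyapV u w ∧ (w - 3 / 14) ^ 2 ≤ 16 * lyapV u w ∧
    Real.exp (-17) / 10 * lyapV u w ≤ 6 * (u - 3 / 14) ^ 2 + (w - 3 / 14) ^ 2 / 2 := by
  have hX : 0 < 7 / 4 * (1 - 2 * u) := by linarith
  have hZ : 0 < 14 / 3 * w := by linarith
  have gX := entG_nonneg hX
  have gZ := entG_nonneg hZ
  have hVd : lyapV u w = 8 / 7 * entG (7 / 4 * (1 - 2 * u)) + 3 / 14 * entG (14 / 3 * w) := rfl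
  set V := lyapV u w with hVdef
  clear_value V
  set X := 7 / 4 * (1 - 2 * u) with hXd
  set Z := 14 / 3 * w with hZd
  have lX := entG_lower hX (show entG X ≤ 3 by linarith)
  have lZ := entG_lower hZ (show entG Z ≤ 14 by linarith)
  have uZ := entG_upper hZ (show entG Z ≤ 14 by linarith)
  have qX := sq_le_entG hX
  have qZ := sq_le_entG hZ
  have e16 := Real.exp_pos (-17)
  -- the factor `e²` pays for the constants `7/4` and `14/3`
  have e1 : Real.exp (-(14 + 1)) = Real.exp 1 * Real.exp 1 * Real.exp (-17) := by
    rw [← Real.exp_add, ← Real.exp_add]; norm_num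
  have e2 : Real.exp (-(14 + 1)) ≤ Real.exp (-(3 + 1)) := Real.exp_le_exp.2 (by norm_num)
  have e3 := Real.exp_one_gt_d9
  have e4 : 5 * Real.exp (-17) ≤ Real.exp (-(14 + 1)) := by rw [e1]; gcongr; nlinarith
  have lX2 : Real.exp (-17) ≤ X := by linarith
  have lZ2 : Real.exp (-17) ≤ Z := by linarith
  have pX : (u - 3 / 14) ^ 2 = 4 / 49 * (X - 1) ^ 2 := by rw [hXd]; ring
  have pZ : (w - 3 / 14) ^ 2 = 9 / 196 * (Z - 1) ^ 2 := by rw [hZd]; ring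
  refine ⟨by linarith, by linarith, by linarith, ?_, ?_, ?_⟩
  · rw [pX]
    have : 2 * (X + 1) * entG X ≤ 6 * entG X := by gcongr; rw [hXd]; linarith
    linarith
  · rw [pZ]
    have : 2 * (Z + 1) * entG Z ≤ 62 * entG Z := by gcongr; linarith
    linarith
  · have a1 : Real.exp (-17) * entG X ≤ (X - 1) ^ 2 :=
      calc Real.exp (-17) * entG X ≤ X * ((X - 1) ^ 2 / X) :=
            mul_le_mul lX2 (entG_le hX) gX hX.le
        _ = _ := by field_simp
    have a2 : Real.exp (-17) * entG Z ≤ (Z - 1) ^ 2 :=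
      calc Real.exp (-17) * entG Z ≤ Z * ((Z - 1) ^ 2 / Z) :=
            mul_le_mul lZ2 (entG_le hZ) gZ hZ.le
        _ = _ := by field_simp
    rw [pX, pZ, hVd]
    nlinarith [sq_nonneg (X - 1), sq_nonneg (Z - 1)]

/-! ### Differential inequalities in the variable `log r` -/

/-- If `df/d(log r) ≤ b`, then `f` grows by at most `b` times the increment of `log r`. -/
lemma growth_bound {f : ℝ → ℝ} {r₀ r₁ b : ℝ} (h0 : 0 < r₀) (h01 : r₀ ≤ r₁)
    (hf : ∀ r ∈ Icc r₀ r₁, ∃ f', HasDerivAt f f' r ∧ r * f' ≤ b) :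
    f r₁ ≤ f r₀ + b * (Real.log r₁ - Real.log r₀) := by
  have hd : ∀ r ∈ Icc r₀ r₁, ∃ d, HasDerivAt (fun r => f r - b * Real.log r) d r ∧ d ≤ 0 := by
    intro r hr
    have hrp : 0 < r := h0.trans_le hr.1
    obtain ⟨f', h1, h2⟩ := hf r hr
    refine ⟨_, h1.sub ((Real.hasDerivAt_log hrp.ne').const_mul b), ?_⟩
    have : f' ≤ b * r⁻¹ := by rw [← div_eq_mul_inv, le_div_iff₀ hrp]; linarith
    linarith
  have hanti : AntitoneOn (fun r => f r - b * Real.log r) (Icc r₀ r₁) := by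
    apply antitoneOn_of_deriv_nonpos (convex_Icc _ _)
    · intro r hr
      obtain ⟨d, h, _⟩ := hd r hr
      exact h.continuousAt.continuousWithinAt
    · intro r hr
      obtain ⟨d, h, _⟩ := hd r (interior_subset hr)
      exact h.differentiableAt.differentiableWithinAt
    · intro r hr
      obtain ⟨d, h, h2⟩ := hd r (interior_subset hr)
      rw [h.deriv]; exact h2
  have := hanti (left_mem_Icc.2 h01) (right_mem_Icc.2 h01) h01
  simp only at this
  linarith

/-- Gronwall's inequality in the variable `log r`. -/
lemma decay_bound {f : ℝ → ℝ} {r₀ r₁ b c : ℝ} (h0 : 0 < r₀) (h01 : r₀ ≤ r₁) (hc : 0 < c)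
    (hf : ∀ r ∈ Icc r₀ r₁, ∃ f', HasDerivAt f f' r ∧ r * f' ≤ -(c * f r) + b) :
    r₁ ^ c * (f r₁ - b / c) ≤ r₀ ^ c * (f r₀ - b / c) := by
  have hd : ∀ r ∈ Icc r₀ r₁, ∃ d, HasDerivAt (fun r => r ^ c * (f r - b / c)) d r ∧ d ≤ 0 := by
    intro r hr
    have hrp : 0 < r := h0.trans_le hr.1
    obtain ⟨f', h1, h2⟩ := hf r hr
    refine ⟨_, (Real.hasDerivAt_rpow_const (Or.inl hrp.ne')).mul (h1.sub_const _), ?_⟩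
    have e : r ^ c = r ^ (c - 1) * r := by rw [Real.rpow_sub_one hrp.ne']; field_simp
    have e2 : c * r ^ (c - 1) * (f r - b / c) + r ^ c * f'
        = r ^ (c - 1) * (c * f r - b + r * f') := by
      rw [e]; field_simp
    rw [e2]
    exact mul_nonpos_of_nonneg_of_nonpos (by positivity) (by linarith)
  have hanti : AntitoneOn (fun r => r ^ c * (f r - b / c)) (Icc r₀ r₁) := by
    apply antitoneOn_of_deriv_nonpos (convex_Icc _ _)
    · intro r hr
      obtain ⟨d, h, _⟩ := hd r hr
      exact h.continuousAt.continuousWithinAt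
    · intro r hr
      obtain ⟨d, h, _⟩ := hd r (interior_subset hr)
      exact h.differentiableAt.differentiableWithinAt
    · intro r hr
      obtain ⟨d, h, h2⟩ := hd r (interior_subset hr)
      rw [h.deriv]; exact h2
  exact hanti (left_mem_Icc.2 h01) (right_mem_Icc.2 h01) h01

/-! ### Steady states near the centre -/

lemma steady_hasDerivAt {φ : ℝ → ℝ} {κ : ℝ} {y : ℝ → ℝ} (h : IsEVSteady φ κ y) {r : ℝ}
    (hr : 0 < r) : HasDerivAt y (deriv y r) r :=
  ((h.1.differentiableOn (by norm_num) r hr.le).differentiableAt (Ici_mem_nhds hr)).hasDerivAt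

/-- Replacing `y` by its constant extension to the left of `0` makes the mass integrand globally
continuous without changing `m` on `[0, ∞)`. -/
lemma mEV_eq_ext (φ : ℝ → ℝ) (y : ℝ → ℝ) {r : ℝ} (hr : 0 ≤ r) :
    mEV φ y r = 4 * Real.pi * ∫ s in (0 : ℝ)..r, gEV φ (y (max s 0)) * s ^ 2 := by
  unfold mEV
  congr 1
  apply intervalIntegral.integral_congr
  intro s hs
  rw [uIcc_of_le hr] at hs
  simp only [max_eq_left hs.1]

lemma ext_continuous {φ : ℝ → ℝ} (hφ : Continuous φ) {κ : ℝ} {y : ℝ → ℝ}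
    (h : IsEVSteady φ κ y) : Continuous fun s => gEV φ (y (max s 0)) * s ^ 2 := by
  have hy : Continuous fun s => y (max s 0) :=
    h.1.continuousOn.comp_continuous (by fun_prop) fun s => le_max_right s 0
  exact ((gEV_continuous φ hφ).comp hy).mul (by fun_prop)

lemma mEV_hasDerivAt {φ : ℝ → ℝ} (hφ : Continuous φ) {κ : ℝ} {y : ℝ → ℝ}
    (h : IsEVSteady φ κ y) {r : ℝ} (hr : 0 < r) :
    HasDerivAt (mEV φ y) (4 * Real.pi * (gEV φ (y r) * r ^ 2)) r := by
  have hc := ext_continuous hφ h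
  have h1 := (hc.integral_hasStrictDerivAt 0 r).hasDerivAt.const_mul (4 * Real.pi)
  rw [max_eq_left hr.le] at h1
  refine h1.congr_of_eventuallyEq ?_
  filter_upwards [Ici_mem_nhds hr] with s hs
  exact mEV_eq_ext φ y hs

lemma mEV_nonneg {φ : ℝ → ℝ} {K : ℝ} (hB : ProfileBounds φ K) (y : ℝ → ℝ) {r : ℝ} (hr : 0 ≤ r) :
    0 ≤ mEV φ y r := by
  unfold mEV
  have : 0 ≤ ∫ s in (0 : ℝ)..r, gEV φ (y s) * s ^ 2 :=
    intervalIntegral.integral_nonneg hr fun s _ => mul_nonneg (hB _).1.1 (sq_nonneg s)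
  have := Real.pi_pos
  positivity

lemma steady_antitone {φ : ℝ → ℝ} {K κ : ℝ} {y : ℝ → ℝ} (hB : ProfileBounds φ K)
    (h : IsEVSteady φ κ y) : AntitoneOn y (Ici 0) := by
  apply antitoneOn_of_deriv_nonpos (convex_Ici 0) h.1.continuousOn
  · intro r hr
    rw [interior_Ici] at hr
    exact (steady_hasDerivAt h hr).differentiableAt.differentiableWithinAt
  · intro r hr
    rw [interior_Ici, mem_Ioi] at hr
    obtain ⟨h1, h2⟩ := h.2.2 r hr
    rw [h2]
    have hm := mEV_nonneg hB y hr.le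
    have hD : 0 < 1 - 2 * mEV φ y r / r := by
      have : 2 * mEV φ y r / r < 1 := by rw [div_lt_one hr]; exact h1
      linarith
    have hh : 0 ≤ hEV φ (y r) := by linarith [(hB (y r)).2.1]
    have := Real.pi_pos
    have : 0 ≤ (1 - 2 * mEV φ y r / r)⁻¹ *
      (mEV φ y r / r ^ 2 + 4 * Real.pi * r * hEV φ (y r)) := by positivity
    linarith

/-- Since `y ≤ κ`, the mass is at most that of a ball of constant density `e^{4κ}`. -/
lemma mEV_le {φ : ℝ → ℝ} (hφ : Continuous φ) {K κ : ℝ} {y : ℝ → ℝ} (hB : ProfileBounds φ K)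
    (h : IsEVSteady φ κ y) {r : ℝ} (hr : 0 ≤ r) :
    mEV φ y r ≤ 4 * Real.pi / 3 * Real.exp (4 * κ) * r ^ 3 := by
  rw [mEV_eq_ext φ y hr]
  have hpi := Real.pi_pos
  have : ∫ s in (0 : ℝ)..r, gEV φ (y (max s 0)) * s ^ 2 ≤
      ∫ s in (0 : ℝ)..r, Real.exp (4 * κ) * s ^ 2 := by
    apply intervalIntegral.integral_mono_on hr ((ext_continuous hφ h).intervalIntegrable _ _)
      (Continuous.intervalIntegrable (by fun_prop) _ _)
    intro s hs
    have hy : y (max s 0) ≤ κ := by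
      rw [← h.2.1]
      exact steady_antitone hB h self_mem_Ici (le_max_right s 0) (le_max_right s 0)
    have := (hB (y (max s 0))).1.2.1
    gcongr
    exact this.trans (Real.exp_le_exp.2 (by linarith))
  rw [intervalIntegral.integral_const_mul, integral_pow] at this
  norm_num at this
  calc _ ≤ 4 * Real.pi * (Real.exp (4 * κ) * (r ^ 3 / 3)) := by gcongr
    _ = _ := by ring

/-- At the radius `e^{-2κ}/10`, the mass is still small and `y` is still close to `κ`, so the
Lyapunov function starts below an absolute constant. -/
lemma lyapV_initial {φ : ℝ → ℝ} (hφ : Continuous φ) {K κ : ℝ} {y : ℝ → ℝ}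
    (hB : ProfileBounds φ K) (h : IsEVSteady φ κ y) {r₀ : ℝ} (hr₀ : r₀ = Real.exp (-2 * κ) / 10) :
    κ - 1 / 10 ≤ y r₀ ∧
      lyapV (mEV φ y r₀ / r₀) (4 * Real.pi * r₀ ^ 2 * Real.exp (4 * y r₀)) ≤ 2 := by
  have hpi := Real.pi_pos
  have hpi3 := Real.pi_gt_three
  have hpi4 := Real.pi_lt_d2
  set e := Real.exp (2 * κ) with he
  have hep : 0 < e := Real.exp_pos _
  have he4 : Real.exp (4 * κ) = e ^ 2 := by
    rw [he, ← Real.exp_nat_mul]; congr 1; push_cast; ring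
  have her : e * r₀ = 1 / 10 := by
    rw [hr₀, he, mul_div_assoc', ← Real.exp_add]; ring_nf; simp
  have hr₀p : 0 < r₀ := by rw [hr₀]; positivity
  have hu : ∀ r, 0 < r → r ≤ r₀ → mEV φ y r / r ≤ 1 / 20 := by
    intro r hr hrr
    rw [div_le_iff₀ hr]
    refine (mEV_le hφ hB h hr.le).trans ?_
    rw [he4]
    have : (e * r) ^ 2 ≤ (1 / 10) ^ 2 := by rw [← her]; gcongr
    calc 4 * Real.pi / 3 * e ^ 2 * r ^ 3 = (4 * Real.pi / 3 * r) * (e * r) ^ 2 := by ring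
      _ ≤ (4 * Real.pi / 3 * r) * (1 / 10) ^ 2 := by gcongr
      _ ≤ _ := by nlinarith
  have hderiv : ∀ r, 0 < r → r ≤ r₀ → -e ≤ deriv y r := by
    intro r hr hrr
    have hu1 := hu r hr hrr
    obtain ⟨h1, h2⟩ := h.2.2 r hr
    rw [h2]
    have hyk : y r ≤ κ := by
      rw [← h.2.1]
      exact steady_antitone hB h self_mem_Ici hr.le hr.le
    have hhle : hEV φ (y r) ≤ e ^ 2 / 3 := by
      have := (hB (y r)).2.2.1
      have h4 : Real.exp (4 * y r) ≤ Real.exp (4 * κ) := Real.exp_le_exp.2 (by linarith)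
      rw [he4] at h4; linarith
    have hh0 : 0 ≤ hEV φ (y r) := by linarith [(hB (y r)).2.1]
    have hm0 := mEV_nonneg hB y hr.le
    have hmr : mEV φ y r / r ^ 2 ≤ 4 * Real.pi / 3 * e ^ 2 * r := by
      rw [div_le_iff₀ (by positivity)]
      have := mEV_le hφ hB h hr.le
      rw [he4] at this
      linarith
    have hDi : (1 - 2 * mEV φ y r / r)⁻¹ ≤ 10 / 9 := by
      rw [inv_le_comm₀ _ (by norm_num)]
      · rw [mul_div_assoc]; linarith
      · rw [mul_div_assoc]; linarith
    have hS : mEV φ y r / r ^ 2 + 4 * Real.pi * r * hEV φ (y r) ≤ 9 / 10 * e := by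
      have : 4 * Real.pi * r * hEV φ (y r) ≤ 4 * Real.pi * r * (e ^ 2 / 3) := by gcongr
      have her' : e * r ≤ 1 / 10 := by rw [← her]; gcongr
      calc _ ≤ (8 * Real.pi / 3 * e) * (e * r) := by linarith
        _ ≤ (8 * Real.pi / 3 * e) * (1 / 10) := by gcongr
        _ ≤ _ := by nlinarith
    have hS0 : 0 ≤ mEV φ y r / r ^ 2 + 4 * Real.pi * r * hEV φ (y r) := by positivity
    have : (1 - 2 * mEV φ y r / r)⁻¹ * (mEV φ y r / r ^ 2 + 4 * Real.pi * r * hEV φ (y r))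
        ≤ 10 / 9 * (9 / 10 * e) := by gcongr
    linarith
  have hmono : MonotoneOn (fun r => y r + e * r) (Icc 0 r₀) := by
    have hda : ∀ r, 0 < r → HasDerivAt (fun r => y r + e * r) (deriv y r + e * 1) r :=
      fun r hr => (steady_hasDerivAt h hr).add ((hasDerivAt_id r).const_mul e)
    apply monotoneOn_of_deriv_nonneg (convex_Icc _ _)
    · exact (h.1.continuousOn.mono Icc_subset_Ici_self).add (by fun_prop)
    · intro r hr
      rw [interior_Icc] at hr
      exact (hda r hr.1).differentiableAt.differentiableWithinAt
    · intro r hr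
      rw [interior_Icc] at hr
      rw [(hda r hr.1).deriv]
      linarith [hderiv r hr.1 hr.2.le]
  have hy1 : κ - 1 / 10 ≤ y r₀ := by
    have := hmono (left_mem_Icc.2 hr₀p.le) (right_mem_Icc.2 hr₀p.le) hr₀p.le
    simp only [h.2.1, her] at this
    linarith
  have hy2 : y r₀ ≤ κ := by
    rw [← h.2.1]
    exact steady_antitone hB h self_mem_Ici hr₀p.le hr₀p.le
  have hu1 := hu r₀ hr₀p le_rfl
  have hu0 : 0 ≤ mEV φ y r₀ / r₀ := div_nonneg (mEV_nonneg hB y hr₀p.le) hr₀p.le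
  -- `w = (4π/100) e^{4(y-κ)}` with `-1/10 ≤ y - κ ≤ 0`
  have hw : 4 * Real.pi * r₀ ^ 2 * Real.exp (4 * y r₀)
      = 4 * Real.pi / 100 * Real.exp (4 * (y r₀ - κ)) := by
    have : Real.exp (4 * y r₀) = Real.exp (4 * (y r₀ - κ)) * e ^ 2 := by
      rw [← he4, ← Real.exp_add]; ring_nf
    rw [this]
    calc _ = 4 * Real.pi * (e * r₀) ^ 2 * Real.exp (4 * (y r₀ - κ)) := by ring
      _ = _ := by rw [her]; ring
  have hx1 : 3 / 5 ≤ Real.exp (4 * (y r₀ - κ)) := by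
    have := Real.add_one_le_exp (4 * (y r₀ - κ))
    linarith
  have hx2 : Real.exp (4 * (y r₀ - κ)) ≤ 1 := Real.exp_le_one_iff.2 (by linarith)
  have hw1 : 3 / 42 ≤ 4 * Real.pi * r₀ ^ 2 * Real.exp (4 * y r₀) := by rw [hw]; nlinarith
  have hw2 : 4 * Real.pi * r₀ ^ 2 * Real.exp (4 * y r₀) ≤ 3 / 14 := by rw [hw]; nlinarith
  refine ⟨hy1, ?_⟩
  generalize 4 * Real.pi * r₀ ^ 2 * Real.exp (4 * y r₀) = w at *
  generalize mEV φ y r₀ / r₀ = u at *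
  have g1 : entG (7 / 4 * (1 - 2 * u)) ≤ 1 := by
    refine (entG_le (by linarith)).trans ?_
    rw [div_le_one (by linarith)]
    nlinarith
  have g2 : entG (14 / 3 * w) ≤ 3 := by
    refine (entG_le (by linarith)).trans ?_
    rw [div_le_iff₀ (by linarith)]
    nlinarith
  unfold lyapV
  linarith

/-- The dissipation inequality along a steady state, at radii where `y ≥ κ/2`. -/
lemma steady_dissipation {φ : ℝ → ℝ} (hφ : Continuous φ) {K κ : ℝ} {y : ℝ → ℝ} (hK : 0 < K)
    (hB : ProfileBounds φ K) (h : IsEVSteady φ κ y) {ε : ℝ} (hεd : ε = K * Real.exp (-(κ / 2)))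
    (hε : ε ≤ 1 / 20) {r : ℝ} (hr : 0 < r) (hyr : κ / 2 ≤ y r) :
    ∃ V', HasDerivAt
        (fun s => lyapV (mEV φ y s / s) (4 * Real.pi * s ^ 2 * Real.exp (4 * y s))) V' r ∧
      r * V' ≤ -(6 * (mEV φ y r / r - 3 / 14) ^ 2
        + (4 * Real.pi * r ^ 2 * Real.exp (4 * y r) - 3 / 14) ^ 2 / 2) + 2 * ε ^ 2 := by
  have hle : K * Real.exp (-(y r)) ≤ ε := by rw [hεd]; gcongr
  have hE := Real.exp_pos (4 * y r)
  have hmul : (1 - ε) * Real.exp (4 * y r) ≤ (1 - K * Real.exp (-(y r))) * Real.exp (4 * y r) := by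
    gcongr
  obtain ⟨⟨_, a2, a3⟩, ⟨_, b2, b3⟩⟩ := hB (y r)
  exact lyapV_hasDerivAt hr (mEV_hasDerivAt hφ h hr) (steady_hasDerivAt h hr) (h.2.2 r hr).2
    (mEV_nonneg hB y hr.le) (h.2.2 r hr).1 (by rw [hεd]; positivity) hε a2 (hmul.trans a3) b2
    (hmul.trans b3)

lemma ratio_mem {φ : ℝ → ℝ} {K κ : ℝ} {y : ℝ → ℝ} (hB : ProfileBounds φ K)
    (h : IsEVSteady φ κ y) {r : ℝ} (hr : 0 < r) :
    0 ≤ mEV φ y r / r ∧ 2 * (mEV φ y r / r) < 1 := by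
  refine ⟨div_nonneg (mEV_nonneg hB y hr.le) hr.le, ?_⟩
  rw [mul_div_assoc', div_lt_one hr]
  exact (h.2.2 r hr).1

/-- While `y ≥ κ/2`, the Lyapunov function stays bounded: its total increase is at most the
integrated perturbation, which is quadratic in `ε`. -/
lemma lyapV_trapped {φ : ℝ → ℝ} (hφ : Continuous φ) {K κ : ℝ} {y : ℝ → ℝ} (hK : 0 < K)
    (hB : ProfileBounds φ K) (h : IsEVSteady φ κ y) {ε : ℝ} (hεd : ε = K * Real.exp (-(κ / 2)))
    (hε : ε ≤ 1 / 20) {r₀ r : ℝ} (hr₀ : r₀ = Real.exp (-2 * κ) / 10) (hr : r₀ ≤ r)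
    (hyr : κ / 2 ≤ y r) (hlog : 2 * ε ^ 2 * (Real.log r - Real.log r₀) ≤ 1) :
    lyapV (mEV φ y r / r) (4 * Real.pi * r ^ 2 * Real.exp (4 * y r)) ≤ 3 := by
  have hr₀p : 0 < r₀ := by rw [hr₀]; positivity
  have h0 := (lyapV_initial hφ hB h hr₀).2
  have := growth_bound (f := fun s => lyapV (mEV φ y s / s)
    (4 * Real.pi * s ^ 2 * Real.exp (4 * y s))) (b := 2 * ε ^ 2) hr₀p hr (by
      intro s hs
      have hsp := hr₀p.trans_le hs.1
      have hys : κ / 2 ≤ y s :=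
        hyr.trans (steady_antitone hB h hsp.le (hsp.le.trans hs.2) hs.2)
      obtain ⟨V', h1, h2⟩ := steady_dissipation hφ hK hB h hεd hε hsp hys
      refine ⟨V', h1, h2.trans ?_⟩
      have : 0 ≤ 6 * (mEV φ y s / s - 3 / 14) ^ 2
        + (4 * Real.pi * s ^ 2 * Real.exp (4 * y s) - 3 / 14) ^ 2 / 2 := by positivity
      linarith)
  linarith

/-- The bound `y ≥ κ/2` propagates to the outer radius `R`: at a radius with `y = κ/2`, the
lower bound for `w = 4π r² e^{4y}` that the Lyapunov function provides would read
`4π r² e^{2κ} ≥ e^{-17}`, which fails for all `r ≤ R`. -/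
lemma y_large {φ : ℝ → ℝ} (hφ : Continuous φ) {K κ : ℝ} {y : ℝ → ℝ} (hK : 0 < K) (hκ : 1 ≤ κ)
    (hB : ProfileBounds φ K) (h : IsEVSteady φ κ y) {ε : ℝ} (hεd : ε = K * Real.exp (-(κ / 2)))
    (hε : ε ≤ 1 / 20) {r₀ R : ℝ} (hr₀ : r₀ = Real.exp (-2 * κ) / 10) (hR : r₀ ≤ R)
    (hlog : 2 * ε ^ 2 * (Real.log R - Real.log r₀) ≤ 1)
    (hfar : 4 * Real.pi * R ^ 2 * Real.exp (2 * κ) < Real.exp (-17)) :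
    κ / 2 ≤ y R := by
  by_contra! hlt
  have hr₀p : 0 < r₀ := by rw [hr₀]; positivity
  have hRp := hr₀p.trans_le hR
  have hy0 := (lyapV_initial hφ hB h hr₀).1
  obtain ⟨r, ⟨hr0, hrR⟩, hyr⟩ := intermediate_value_Icc' hR
    (h.1.continuousOn.mono (Icc_subset_Ici_self.trans (Ici_subset_Ici.2 hr₀p.le)))
    (show κ / 2 ∈ Icc (y R) (y r₀) from ⟨hlt.le, by linarith⟩)
  have hpi := Real.pi_pos
  have hrp := hr₀p.trans_le hr0
  have hl : Real.log r ≤ Real.log R := Real.log_le_log hrp hrR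
  have hV := lyapV_trapped hφ hK hB h hεd hε hr₀ hr0 hyr.ge (le_trans (by gcongr) hlog)
  obtain ⟨u0, u1⟩ := ratio_mem hB h hrp
  have hw := (lyapV_region u0 u1 (by positivity) hV).2.1
  rw [hyr] at hw
  have hbig : Real.exp (-17) ≤ 4 * Real.pi * R ^ 2 * Real.exp (4 * (κ / 2)) :=
    hw.trans (by gcongr)
  rw [show 4 * (κ / 2) = 2 * κ by ring] at hbig
  linarith

/-! ### The critical layer -/

/-- The six quantities of the theorem are Lipschitz functions of `(u, w, a, b)` near
`(3/14, 3/14, 1, 1)`; here `w a = 4π r² ρ` and `w b = 12π r² σ`. -/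
lemma final_bounds {u w a b T : ℝ} (hT : 0 ≤ T) (hD : Real.exp (-17) ≤ 1 - 2 * u)
    (hw0 : 0 ≤ w) (hw : w ≤ 7) (hp : |u - 3 / 14| ≤ 2 * T) (hq : |w - 3 / 14| ≤ 8 * T)
    (ha1 : a ≤ 1) (ha : 1 - T ≤ a) (hb1 : b ≤ 1) (hb : 1 - T ≤ b) :
    |w * a / (4 * Real.pi) - 3 / (56 * Real.pi)| ≤ 100 * Real.exp 17 * T ∧
    |w * b / (12 * Real.pi) - 1 / (56 * Real.pi)| ≤ 100 * Real.exp 17 * T ∧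
    |u - 3 / 14| ≤ 100 * Real.exp 17 * T ∧
    |2 * ((1 - 2 * u)⁻¹ * (u + w * b / 3)) - 1| ≤ 100 * Real.exp 17 * T ∧
    |(1 - 2 * u)⁻¹ - 7 / 4| ≤ 100 * Real.exp 17 * T ∧
    |(1 - 2 * u)⁻¹ * (w * a - u)| ≤ 100 * Real.exp 17 * T := by
  have hpi3 := Real.pi_gt_three
  have hDp : 0 < 1 - 2 * u := (Real.exp_pos _).trans_le hD
  have hL : (1 - 2 * u)⁻¹ ≤ Real.exp 17 := by
    rw [inv_le_comm₀ hDp (Real.exp_pos _), ← Real.exp_neg]; exact hD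
  have hL1 : 1 ≤ Real.exp 17 := Real.one_le_exp (by norm_num)
  have hwa : |w * a - 3 / 14| ≤ 15 * T := by
    rw [abs_le] at hq ⊢
    constructor <;> nlinarith
  have hwb : |w * b - 3 / 14| ≤ 15 * T := by
    rw [abs_le] at hq ⊢
    constructor <;> nlinarith
  have hTL : T ≤ Real.exp 17 * T := by nlinarith
  have hmul : ∀ x, |x| ≤ 100 * T → |(1 - 2 * u)⁻¹ * x| ≤ 100 * Real.exp 17 * T := by
    intro x hx
    rw [abs_mul, abs_of_pos (inv_pos.2 hDp)]
    calc (1 - 2 * u)⁻¹ * |x| ≤ Real.exp 17 * (100 * T) := by gcongr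
      _ = _ := by ring
  refine ⟨?_, ?_, by linarith, ?_, ?_, ?_⟩
  · have : w * a / (4 * Real.pi) - 3 / (56 * Real.pi) = (w * a - 3 / 14) / (4 * Real.pi) := by
      field_simp; ring
    rw [this, abs_div, abs_of_pos (show 0 < 4 * Real.pi by linarith)]
    exact (div_le_self (abs_nonneg _) (by linarith)).trans (by linarith)
  · have : w * b / (12 * Real.pi) - 1 / (56 * Real.pi) = (w * b - 3 / 14) / (12 * Real.pi) := by
      field_simp; ring
    rw [this, abs_div, abs_of_pos (show 0 < 12 * Real.pi by linarith)]
    exact (div_le_self (abs_nonneg _) (by linarith)).trans (by linarith)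
  · have : 2 * ((1 - 2 * u)⁻¹ * (u + w * b / 3)) - 1
        = (1 - 2 * u)⁻¹ * (4 * (u - 3 / 14) + 2 / 3 * (w * b - 3 / 14)) := by
      field_simp; ring
    rw [this]
    apply hmul
    rw [abs_le] at hp hwb ⊢
    constructor <;> linarith
  · have : (1 - 2 * u)⁻¹ - 7 / 4 = (1 - 2 * u)⁻¹ * (7 / 2 * (u - 3 / 14)) := by
      field_simp; ring
    rw [this]
    apply hmul
    rw [abs_le] at hp ⊢
    constructor <;> linarith
  · apply hmul
    rw [abs_le] at hp hwa ⊢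
    constructor <;> linarith

/-- `r λ' = (4π r² ρ - m/r) / (1 - 2m/r)`. -/
lemma r_mul_deriv_lamEV {φ : ℝ → ℝ} (hφ : Continuous φ) {κ : ℝ} {y : ℝ → ℝ}
    (h : IsEVSteady φ κ y) {r : ℝ} (hr : 0 < r) :
    r * deriv (lamEV φ y) r
      = (1 - 2 * (mEV φ y r / r))⁻¹ * (4 * Real.pi * r ^ 2 * gEV φ (y r) - mEV φ y r / r) := by
  have hD : 0 < r - 2 * mEV φ y r := by linarith [(h.2.2 r hr).1]
  have e1 : 1 - 2 * mEV φ y r / r = (r - 2 * mEV φ y r) / r := by field_simp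
  have e2 : 1 - 2 * (mEV φ y r / r) = (r - 2 * mEV φ y r) / r := by field_simp
  have h1 := ((((mEV_hasDerivAt hφ h hr).const_mul 2).div (hasDerivAt_id r) hr.ne').const_sub
    1).log (by simp only [id, Pi.div_apply]; rw [e1]; positivity)
  have h2 : HasDerivAt (lamEV φ y) _ r := h1.const_mul (-(1 / 2) : ℝ)
  rw [h2.deriv]
  simp only [id, Pi.div_apply, e1, e2]
  field_simp

/-- All conditions of the form "`κ` is large" that the argument uses. -/
lemma large_kappa (K c : ℝ) :
    ∃ κ₀ : ℝ, 1 ≤ κ₀ ∧ ∀ κ, κ₀ ≤ κ →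
      K * Real.exp (-(κ / 2)) ≤ 1 / 20 ∧
      2 * (K * Real.exp (-(κ / 2))) ^ 2 *
        (Real.log (κ ^ (1 / 5 : ℝ) * Real.exp (-2 * κ)) - Real.log (Real.exp (-2 * κ) / 10)) ≤ 1 ∧
      4 * Real.pi * (κ ^ (1 / 5 : ℝ) * Real.exp (-2 * κ)) ^ 2 * Real.exp (2 * κ)
        < Real.exp (-17) ∧
      2 * (K * Real.exp (-(κ / 2))) ^ 2 / c ≤ κ ^ (-(c / 10)) ∧
      K * Real.exp (-(κ / 2)) ≤ κ ^ (-(c / 20)) := by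
  have hlim := fun s b (hb : (0:ℝ) < b) A B (hB : (0:ℝ) < B) =>
    ((tendsto_rpow_mul_exp_neg_mul_atTop_nhds_zero s b hb).const_mul A).eventually_lt_const
      (show A * 0 < B by rw [mul_zero]; exact hB)
  have hsq : ∀ κ : ℝ, (K * Real.exp (-(κ / 2))) ^ 2 = K ^ 2 * Real.exp (-1 * κ) := by
    intro κ
    rw [mul_pow, ← Real.exp_nat_mul]; congr 2; push_cast; ring
  have hhalf : ∀ κ : ℝ, Real.exp (-(κ / 2)) = Real.exp (-(1 / 2) * κ) := by
    intro κ; congr 1; ring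
  have ev : ∀ᶠ κ : ℝ in atTop, _ :=
    (hlim 0 (1 / 2) (by norm_num) K (1 / 20) (by norm_num)).and
    ((hlim 1 1 one_pos (2 * K ^ 2) (1 / 2) (by norm_num)).and
    ((hlim 0 1 one_pos (2 * K ^ 2 * Real.log 10) (1 / 2) (by norm_num)).and
    ((hlim (2 / 5) 2 (by norm_num) (4 * Real.pi) _ (Real.exp_pos (-17))).and
    ((hlim (c / 10) 1 one_pos (2 * K ^ 2 / c) 1 one_pos).and
    (hlim (c / 20) (1 / 2) (by norm_num) K 1 one_pos)))))
  obtain ⟨κ₁, hκ₁⟩ := eventually_atTop.1 ev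
  refine ⟨max 1 κ₁, le_max_left _ _, fun κ hκ => ?_⟩
  have hκ1 : 1 ≤ κ := (le_max_left _ _).trans hκ
  have hκ0 : 0 < κ := by linarith
  obtain ⟨e1, e2, e3, e4, e5, e6⟩ := hκ₁ κ ((le_max_right _ _).trans hκ)
  simp only [Real.rpow_zero, one_mul, Real.rpow_one] at e1 e2 e3
  refine ⟨?_, ?_, ?_, ?_, ?_⟩
  · rw [hhalf]; exact e1.le
  · rw [hsq, Real.log_mul (by positivity) (by positivity), Real.log_div (by positivity) (by norm_num),
      Real.log_rpow hκ0]
    have hl : Real.log κ ≤ κ := Real.log_le_self hκ0.le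
    have : 2 * (K ^ 2 * Real.exp (-1 * κ)) * (1 / 5 * Real.log κ + Real.log (Real.exp (-2 * κ)) -
        (Real.log (Real.exp (-2 * κ)) - Real.log 10))
        ≤ 2 * (K ^ 2 * Real.exp (-1 * κ)) * (κ + Real.log 10) := by
      gcongr; linarith
    linarith
  · refine lt_of_eq_of_lt ?_ e4
    have a1 : (κ ^ (1 / 5 : ℝ)) ^ 2 = κ ^ (2 / 5 : ℝ) := by
      rw [← Real.rpow_mul_natCast hκ0.le]; norm_num
    have a2 : Real.exp (-2 * κ) ^ 2 * Real.exp (2 * κ) = Real.exp (-2 * κ) := by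
      rw [← Real.exp_nat_mul, ← Real.exp_add]; congr 1; push_cast; ring
    rw [mul_pow, a1, mul_assoc, mul_assoc, mul_assoc, a2]; ring
  · rw [hsq, Real.rpow_neg hκ0.le, ← one_div, le_div_iff₀ (by positivity)]
    refine le_of_eq_of_le ?_ e5.le
    ring
  · rw [hhalf, Real.rpow_neg hκ0.le, ← one_div, le_div_iff₀ (by positivity)]
    refine le_of_eq_of_le ?_ e6.le
    ring

set_option maxHeartbeats 1000000 in
/-- In the critical layer, `(u, w)` is within a multiple of `κ^{-c/20}` of the fixed point, where
`c = e^{-17}/10` is the decay rate of the Lyapunov function. -/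
lemma layer_deviation {φ : ℝ → ℝ} (hφcont : Continuous φ) {K κ c : ℝ} {y : ℝ → ℝ} (hK : 0 < K)
    (hc : c = Real.exp (-17) / 10) (hκ1 : 1 ≤ κ) (hB : ProfileBounds φ K) (h : IsEVSteady φ κ y)
    (l1 : K * Real.exp (-(κ / 2)) ≤ 1 / 20)
    (l2 : 2 * (K * Real.exp (-(κ / 2))) ^ 2 *
        (Real.log (κ ^ (1 / 5 : ℝ) * Real.exp (-2 * κ)) - Real.log (Real.exp (-2 * κ) / 10)) ≤ 1)
    (l3 : 4 * Real.pi * (κ ^ (1 / 5 : ℝ) * Real.exp (-2 * κ)) ^ 2 * Real.exp (2 * κ)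
        < Real.exp (-17))
    (l4 : 2 * (K * Real.exp (-(κ / 2))) ^ 2 / c ≤ κ ^ (-(c / 10)))
    (l5 : K * Real.exp (-(κ / 2)) ≤ κ ^ (-(c / 20))) {r : ℝ}
    (hr1 : κ ^ (1 / 10 : ℝ) * Real.exp (-2 * κ) ≤ r)
    (hr2 : r ≤ κ ^ (1 / 5 : ℝ) * Real.exp (-2 * κ)) :
    0 < r ∧ Real.exp (-17) ≤ 1 - 2 * (mEV φ y r / r) ∧
      4 * Real.pi * r ^ 2 * Real.exp (4 * y r) ≤ 7 ∧
      |mEV φ y r / r - 3 / 14| ≤ 2 * κ ^ (-(c / 20)) ∧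
      |4 * Real.pi * r ^ 2 * Real.exp (4 * y r) - 3 / 14| ≤ 8 * κ ^ (-(c / 20)) ∧
      (1 - κ ^ (-(c / 20))) * Real.exp (4 * y r) ≤
        (1 - K * Real.exp (-(y r))) * Real.exp (4 * y r) := by
  have hpi := Real.pi_pos
  have hcp : 0 < c := by rw [hc]; positivity
  have hκp : 0 < κ := by linarith
  set ε := K * Real.exp (-(κ / 2)) with hε
  set R := κ ^ (1 / 5 : ℝ) * Real.exp (-2 * κ) with hR
  set r₀ := Real.exp (-2 * κ) / 10 with hr₀
  set T := κ ^ (-(c / 20)) with hT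
  have hTp : 0 < T := by positivity
  have hr₀p : 0 < r₀ := by positivity
  have hκr : κ ^ (1 / 10 : ℝ) * r₀ ≤ r := by
    refine le_trans ?_ hr1
    have := Real.exp_pos (-2 * κ)
    gcongr
    linarith
  have hr₀r : r₀ ≤ r := by
    refine le_trans ?_ hκr
    exact le_mul_of_one_le_left hr₀p.le (Real.one_le_rpow hκ1 (by norm_num))
  have hrp : 0 < r := hr₀p.trans_le hr₀r
  have hyR : κ / 2 ≤ y R :=
    y_large hφcont hK hκ1 hB h hε l1 hr₀ (hr₀r.trans hr2) l2 l3
  have hys : ∀ s, 0 < s → s ≤ r → κ / 2 ≤ y s := fun s hs hsr =>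
    hyR.trans (steady_antitone hB h hs.le (hrp.le.trans hr2) (hsr.trans hr2))
  have hV3 : ∀ s, r₀ ≤ s → s ≤ r →
      lyapV (mEV φ y s / s) (4 * Real.pi * s ^ 2 * Real.exp (4 * y s)) ≤ 3 := by
    intro s hs hsr
    have hsp := hr₀p.trans_le hs
    have hl : Real.log s ≤ Real.log R := Real.log_le_log hsp (hsr.trans hr2)
    exact lyapV_trapped hφcont hK hB h hε l1 hr₀ hs (hys s hsp hsr) (le_trans (by gcongr) l2)
  have hdecay := decay_bound (f := fun s => lyapV (mEV φ y s / s)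
    (4 * Real.pi * s ^ 2 * Real.exp (4 * y s))) (b := 2 * ε ^ 2) hr₀p hr₀r hcp (by
      intro s hs
      have hsp := hr₀p.trans_le hs.1
      obtain ⟨V', h1, h2⟩ := steady_dissipation hφcont hK hB h hε l1 hsp (hys s hsp hs.2)
      obtain ⟨u0, u1⟩ := ratio_mem hB h hsp
      have h3 := (lyapV_region u0 u1 (by positivity) (hV3 s hs.1 hs.2)).2.2.2.2.2
      rw [← hc] at h3
      exact ⟨V', h1, by linarith⟩)
  have hV0 := (lyapV_initial hφcont hB h hr₀).2
  obtain ⟨u0, u1⟩ := ratio_mem hB h hrp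
  obtain ⟨r1, r2, r3, r4, r5, -⟩ := lyapV_region u0 u1 (by positivity) (hV3 r hr₀r le_rfl)
  have hT2 : κ ^ (-(c / 10)) = T ^ 2 := by
    rw [hT, ← Real.rpow_mul_natCast hκp.le]; congr 1; push_cast; ring
  -- `V ≤ 2 (r₀/r)^c + 2ε²/c`, and both terms are at most a multiple of `κ^{-c/10}`
  have hV : lyapV (mEV φ y r / r) (4 * Real.pi * r ^ 2 * Real.exp (4 * y r)) ≤ 4 * T ^ 2 := by
    rw [hT2] at l4
    have hE : 0 ≤ 2 * ε ^ 2 / c := by positivity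
    set V := lyapV (mEV φ y r / r) (4 * Real.pi * r ^ 2 * Real.exp (4 * y r))
    by_contra! hlt
    have hpos : 0 ≤ V - 2 * ε ^ 2 / c := by nlinarith
    have e1 : (κ ^ (1 / 10 : ℝ) * r₀) ^ c ≤ r ^ c :=
      Real.rpow_le_rpow (by positivity) hκr hcp.le
    have e2 : (κ ^ (1 / 10 : ℝ) * r₀) ^ c = κ ^ (c / 10) * r₀ ^ c := by
      rw [Real.mul_rpow (by positivity) hr₀p.le, ← Real.rpow_mul hκp.le]; congr 2; ring
    have e3 : κ ^ (c / 10) * T ^ 2 = 1 := by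
      rw [← hT2, ← Real.rpow_add hκp]; simp
    have hrc : 0 < r₀ ^ c := by positivity
    have e4 : κ ^ (c / 10) * r₀ ^ c * (V - 2 * ε ^ 2 / c) ≤ r₀ ^ c * 2 := by
      rw [← e2]
      refine (mul_le_mul_of_nonneg_right e1 hpos).trans (hdecay.trans ?_)
      gcongr; linarith
    have e5 : κ ^ (c / 10) * (V - 2 * ε ^ 2 / c) ≤ 2 := by
      refine le_of_mul_le_mul_left ?_ hrc
      linarith
    have e6 : κ ^ (c / 10) * (3 * T ^ 2) ≤ κ ^ (c / 10) * (V - 2 * ε ^ 2 / c) := by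
      gcongr; linarith
    linarith
  have hp : |mEV φ y r / r - 3 / 14| ≤ 2 * T := abs_le_of_sq_le_sq (by nlinarith) (by positivity)
  have hq : |4 * Real.pi * r ^ 2 * Real.exp (4 * y r) - 3 / 14| ≤ 8 * T :=
    abs_le_of_sq_le_sq (by nlinarith) (by positivity)
  have hEp := Real.exp_pos (4 * y r)
  have hle : (1 - T) * Real.exp (4 * y r) ≤
      (1 - K * Real.exp (-(y r))) * Real.exp (4 * y r) := by
    have : K * Real.exp (-(y r)) ≤ ε := by
      have := hys r hrp le_rfl
      rw [hε]; gcongr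
    gcongr
    exact this.trans l5
  exact ⟨hrp, r1, r3, hp, hq, hle⟩

/-- **Approach to the Bisnovatyi-Kogan–Zel'dovich solution in the critical layer for
large central redshift.**  Here `μ_κ' = −y_κ'` and `e^{2λ_κ(r)} = (1−2m_κ(r)/r)⁻¹`. -/
theorem stmt_17 (φ : ℝ → ℝ) (hφcont : Continuous φ)
    (hφC2 : ContDiffOn ℝ 2 φ (Ioi 0))
    (hφ0 : ∀ η : ℝ, η ≤ 0 → φ η = 0) (hφpos : ∀ η : ℝ, 0 < η → 0 < φ η)
    (C η₀ k : ℝ) (hC : 0 < C) (hη₀ : 0 < η₀) (hk : 0 < k) (hk' : k < 3 / 2)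
    (hgrowth : ∀ η : ℝ, 0 < η → η < η₀ → C * η ^ k ≤ φ η)
    (hnorm : 4 * Real.pi * ∫ η in (0 : ℝ)..1, φ η * (1 - η) ^ 3 = 1)
    (Y : ℝ → ℝ → ℝ) (hY : ∀ κ : ℝ, 0 < κ → IsEVSteady φ κ (Y κ)) :
    ∃ α₁ α₂ : ℝ, 0 < α₁ ∧ α₁ < α₂ ∧ α₂ < 1 / 4 ∧
      ∃ κ₀ δ Cb : ℝ, 0 < κ₀ ∧ 0 < δ ∧ 0 < Cb ∧
        ∀ κ : ℝ, κ₀ ≤ κ →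
          ∀ r : ℝ, κ ^ α₁ * Real.exp (-2 * κ) ≤ r → r ≤ κ ^ α₂ * Real.exp (-2 * κ) →
            |r ^ 2 * gEV φ (Y κ r) - 3 / (56 * Real.pi)| ≤ Cb * κ ^ (-δ) ∧
            |r ^ 2 * hEV φ (Y κ r) - 1 / (56 * Real.pi)| ≤ Cb * κ ^ (-δ) ∧
            |mEV φ (Y κ) r / r - 3 / 14| ≤ Cb * κ ^ (-δ) ∧
            |2 * r * (-(deriv (Y κ) r)) - 1| ≤ Cb * κ ^ (-δ) ∧
            |(1 - 2 * mEV φ (Y κ) r / r)⁻¹ - 7 / 4| ≤ Cb * κ ^ (-δ) ∧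
            |r * deriv (lamEV φ (Y κ)) r| ≤ Cb * κ ^ (-δ) := by
  have hnn : ∀ η, 0 ≤ φ η := fun η =>
    (le_or_gt η 0).elim (fun h => (hφ0 η h).ge) fun h => (hφpos η h).le
  obtain ⟨K, hK, hB⟩ := EV_bounds φ hφcont hnn hnorm
  have hpi := Real.pi_pos
  set c : ℝ := Real.exp (-17) / 10 with hc
  have hcp : 0 < c := by positivity
  obtain ⟨κ₀, hκ₀, hlarge⟩ := large_kappa K c
  refine ⟨1 / 10, 1 / 5, by norm_num, by norm_num, by norm_num, κ₀, c / 20, 100 * Real.exp 17,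
    by linarith, by positivity, by positivity, fun κ hκ r hr1 hr2 => ?_⟩
  obtain ⟨l1, l2, l3, l4, l5⟩ := hlarge κ hκ
  have hκ1 : 1 ≤ κ := hκ₀.trans hκ
  have hκp : 0 < κ := by linarith
  have h := hY κ hκp
  set y := Y κ
  have hTp : 0 < κ ^ (-(c / 20)) := by positivity
  obtain ⟨hrp, r1, r3, hp, hq, hle⟩ :=
    layer_deviation hφcont hK hc hκ1 hB h l1 l2 l3 l4 l5 hr1 hr2
  obtain ⟨⟨_, a2, a3⟩, ⟨_, b2, b3⟩⟩ := hB (y r)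
  have hEp := Real.exp_pos (4 * y r)
  obtain ⟨f1, f2, f3, f4, f5, f6⟩ := final_bounds hTp.le r1
    (show 0 ≤ 4 * Real.pi * r ^ 2 * Real.exp (4 * y r) by positivity) r3 hp hq
    ((div_le_one hEp).2 a2) ((le_div_iff₀ hEp).2 (hle.trans a3))
    ((div_le_one hEp).2 b2) ((le_div_iff₀ hEp).2 (hle.trans b3))
  have w1 : 4 * Real.pi * r ^ 2 * Real.exp (4 * y r) * (gEV φ (y r) / Real.exp (4 * y r))
      = 4 * Real.pi * r ^ 2 * gEV φ (y r) := by field_simp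
  have w2 : 4 * Real.pi * r ^ 2 * Real.exp (4 * y r) * (3 * hEV φ (y r) / Real.exp (4 * y r))
      = 12 * Real.pi * r ^ 2 * hEV φ (y r) := by field_simp; ring
  rw [w1] at f1 f6
  rw [w2] at f2 f4
  refine ⟨?_, ?_, f3, ?_, ?_, ?_⟩
  · rwa [show 4 * Real.pi * r ^ 2 * gEV φ (y r) / (4 * Real.pi) = r ^ 2 * gEV φ (y r) by
      field_simp] at f1
  · rwa [show 12 * Real.pi * r ^ 2 * hEV φ (y r) / (12 * Real.pi) = r ^ 2 * hEV φ (y r) by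
      field_simp] at f2
  · have e : 2 * r * (-(deriv y r)) = 2 * ((1 - 2 * (mEV φ y r / r))⁻¹ *
        (mEV φ y r / r + 12 * Real.pi * r ^ 2 * hEV φ (y r) / 3)) := by
      have e0 : r * (mEV φ y r / r ^ 2 + 4 * Real.pi * r * hEV φ (y r))
          = mEV φ y r / r + 12 * Real.pi * r ^ 2 * hEV φ (y r) / 3 := by field_simp; ring
      rw [(h.2.2 r hrp).2, mul_div_assoc 2, ← e0]
      ring
    rwa [e]
  · rwa [mul_div_assoc]
  · rwa [r_mul_deriv_lamEV hφcont h hrp]
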